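/- Let (X,T) be a nontrivial TDS (X contains at least two points). Then the whole space X is not a mean Li-Yorke set; that is, there exist distinct x,y ∈ X such that (x,y) is not a mean Li-Yorke pair. -/

import Mathlib

open Filter Metric Set

/-- Birkhoff average of the distance between the orbits of `x` and `y`. -/
noncomputable def birkhoffAvg {X : Type*} [PseudoMetricSpace X]
    (T : X → X) (x y : X) (N : ℕ) : ℝ :=
  (∑ k ∈ Finset.range N, dist (T^[k] x) (T^[k] y)) / N

/-- A pair `(x,y)` is mean proximal if
`liminf_{N→∞} (1/N) ∑_{k<N} d(T^k x, T^k y) = 0`. -/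
def MeanProximalPair {X : Type*} [PseudoMetricSpace X] (T : X → X) (x y : X) : Prop :=
  liminf (birkhoffAvg T x y) atTop = 0

/-- A mean Li-Yorke pair: a mean proximal pair with positive upper Birkhoff
distance average. -/
def MeanLiYorkePair {X : Type*} [PseudoMetricSpace X] (T : X → X) (x y : X) : Prop :=
  MeanProximalPair T x y ∧ 0 < limsup (birkhoffAvg T x y) atTop

theorem birkhoffAvg_le_diam {X : Type*} [PseudoMetricSpace X] [CompactSpace X]
    (T : X → X) (x y : X) (N : ℕ) : birkhoffAvg T x y N ≤ diam (univ : Set X) := by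
  refine div_le_of_le_mul₀ (Nat.cast_nonneg N) diam_nonneg ?_
  calc ∑ k ∈ Finset.range N, dist (T^[k] x) (T^[k] y)
      ≤ ∑ _k ∈ Finset.range N, diam (univ : Set X) := Finset.sum_le_sum fun k _ =>
        dist_le_diam_of_mem isCompact_univ.isBounded (mem_univ _) (mem_univ _)
    _ = diam (univ : Set X) * N := by simp [mul_comm]

theorem birkhoffAvg_nonneg {X : Type*} [PseudoMetricSpace X]
    (T : X → X) (x y : X) (N : ℕ) : 0 ≤ birkhoffAvg T x y N :=
  div_nonneg (Finset.sum_nonneg fun _ _ => dist_nonneg) (Nat.cast_nonneg N)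

/-- A mean proximal pair has arbitrarily small Birkhoff averages of positive length. -/
theorem MeanProximalPair.exists_sum_lt {X : Type*} [PseudoMetricSpace X] [CompactSpace X]
    {T : X → X} {x y : X} (h : MeanProximalPair T x y) {ε : ℝ} (hε : 0 < ε) :
    ∃ N : ℕ, 0 < N ∧ ∑ k ∈ Finset.range N, dist (T^[k] x) (T^[k] y) < ε * N := by
  by_contra! hN
  have hle : ε ≤ liminf (birkhoffAvg T x y) atTop := by
    refine le_liminf_of_le ?_ ?_
    · exact (isBoundedUnder_of ⟨_, birkhoffAvg_le_diam T x y⟩).isCoboundedUnder_ge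
    · filter_upwards [eventually_gt_atTop 0] with N hN0
      exact (le_div_iff₀ (Nat.cast_pos.2 hN0)).2 (hN N hN0)
  rw [MeanProximalPair] at h
  linarith

/-- If all pairs of distinct points are mean proximal, then `T` has a fixed point. -/
theorem exists_isFixedPt_of_forall_meanProximalPair {X : Type*} [MetricSpace X] [CompactSpace X]
    [Nonempty X] {T : X → X} (hT : Continuous T)
    (h : ∀ x y : X, x ≠ y → MeanProximalPair T x y) : ∃ p, T p = p := by
  obtain ⟨p, -, hp⟩ := isCompact_univ.exists_isMinOn univ_nonempty
    (f := fun x => dist x (T x)) (by fun_prop)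
  refine ⟨p, ?_⟩
  by_contra hne
  have hpos : 0 < dist p (T p) := dist_pos.2 (Ne.symm hne)
  obtain ⟨N, -, hN⟩ := (h p (T p) (Ne.symm hne)).exists_sum_lt hpos
  have hge : ∑ _k ∈ Finset.range N, dist p (T p)
      ≤ ∑ k ∈ Finset.range N, dist (T^[k] p) (T^[k] (T p)) := by
    refine Finset.sum_le_sum fun k _ => ?_
    rw [← Function.iterate_succ_apply, Function.iterate_succ_apply']
    exact hp (mem_univ _)
  simp only [Finset.sum_const, Finset.card_range, nsmul_eq_mul] at hge
  linarith

/-- If from every point some block of length at most `M` has average below `ε`, then every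
orbit sum of length `n` is at most `ε * n` up to an error bounded independently of `n`. -/
theorem sum_iterate_le_of_exists_block {X : Type*} {T : X → X} {f : X → ℝ} {ε C : ℝ} {M : ℕ}
    (hε : 0 ≤ ε) (hC : 0 ≤ C) (hf : ∀ x, f x ≤ C)
    (hM : ∀ x, ∃ N : ℕ, 0 < N ∧ N ≤ M ∧ ∑ k ∈ Finset.range N, f (T^[k] x) ≤ ε * N)
    (n : ℕ) (x : X) : ∑ k ∈ Finset.range n, f (T^[k] x) ≤ ε * n + M * C := by
  induction n using Nat.strong_induction_on generalizing x with
  | _ n ih =>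
    obtain ⟨N, hN0, hNM, hN⟩ := hM x
    rcases lt_or_ge n N with hn | hn
    · have h1 : ∑ k ∈ Finset.range n, f (T^[k] x) ≤ ∑ _k ∈ Finset.range n, C :=
        Finset.sum_le_sum fun k _ => hf _
      simp only [Finset.sum_const, Finset.card_range, nsmul_eq_mul] at h1
      have h2 : (n : ℝ) * C ≤ M * C := by
        gcongr
        exact hn.le.trans hNM
      have h3 : 0 ≤ ε * n := by positivity
      linarith
    · obtain ⟨m, rfl⟩ := Nat.exists_eq_add_of_le hn
      have h1 := ih m (by omega) (T^[N] x)
      simp only [← Function.iterate_add_apply] at h1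
      rw [Finset.sum_range_add]
      simp only [add_comm N]
      push_cast
      linarith

/-- If every point is mean proximal to a fixed point `p`, then all Birkhoff averages of the
distance to `p` converge to zero. -/
theorem tendsto_birkhoffAvg_of_forall_meanProximalPair {X : Type*} [MetricSpace X]
    [CompactSpace X] {T : X → X} (hT : Continuous T) {p : X} (hp : T p = p)
    (h : ∀ x : X, x ≠ p → MeanProximalPair T x p) (x : X) :
    Tendsto (birkhoffAvg T x p) atTop (nhds 0) := by
  have hpk (k : ℕ) : T^[k] p = p := Function.iterate_fixed hp k
  have hsmall {ε : ℝ} (hε : 0 < ε) (z : X) :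
      ∃ N : ℕ, 0 < N ∧ ∑ k ∈ Finset.range N, dist (T^[k] z) p < ε * N := by
    by_cases hz : z = p
    · exact ⟨1, one_pos, by simpa [hz] using hε⟩
    · simpa only [hpk] using (h z hz).exists_sum_lt hε
  rw [Metric.tendsto_atTop]
  intro ε hε
  choose N hN0 hN using hsmall (half_pos hε)
  have hopen (z : X) : IsOpen {w | ∑ k ∈ Finset.range (N z), dist (T^[k] w) p < ε / 2 * N z} := by
    refine isOpen_lt (continuous_finsetSum _ fun k _ => ?_) continuous_const
    exact (hT.iterate k).dist continuous_const
  obtain ⟨t, ht⟩ := isCompact_univ.elim_finite_subcover _ hopen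
    fun z _ => mem_iUnion.2 ⟨z, hN z⟩
  have hblock (z : X) : ∃ K : ℕ, 0 < K ∧ K ≤ t.sup N ∧
      ∑ k ∈ Finset.range K, dist (T^[k] z) p ≤ ε / 2 * K := by
    obtain ⟨w, hw, hz⟩ := mem_iUnion₂.1 (ht (mem_univ z))
    exact ⟨N w, hN0 w, Finset.le_sup hw, le_of_lt hz⟩
  have hbound := sum_iterate_le_of_exists_block (T := T) (f := fun z => dist z p)
    (half_pos hε).le diam_nonneg
    (fun z => dist_le_diam_of_mem isCompact_univ.isBounded (mem_univ z) (mem_univ p)) hblock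
  obtain ⟨n₀, hn₀⟩ := exists_nat_gt ((t.sup N : ℕ) * diam (univ : Set X) / (ε / 2))
  refine ⟨n₀ + 1, fun n hn => ?_⟩
  rw [Real.dist_0_eq_abs, abs_of_nonneg (birkhoffAvg_nonneg T x p n), birkhoffAvg,
    div_lt_iff₀ (Nat.cast_pos.2 (by omega))]
  simp only [hpk]
  have hn' : (n₀ : ℝ) ≤ n := by exact_mod_cast (by omega : n₀ ≤ n)
  have hlt := (div_lt_iff₀ (half_pos hε)).1 (hn₀.trans_le hn')
  have := hbound n x
  linarith

/-- In a nontrivial TDS the whole space is never a mean Li-Yorke set: there are two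
distinct points which do not form a mean Li-Yorke pair. -/
theorem whole_space_not_meanLiYorke_set
    {X : Type*} [MetricSpace X] [CompactSpace X] (T : X → X) (hT : Continuous T)
    (hX : ∃ x y : X, x ≠ y) :
    ∃ x y : X, x ≠ y ∧ ¬ MeanLiYorkePair T x y := by
  by_contra! h
  obtain ⟨a, b, hab⟩ := hX
  have : Nonempty X := ⟨a⟩
  obtain ⟨p, hp⟩ := exists_isFixedPt_of_forall_meanProximalPair hT fun x y hxy => (h x y hxy).1
  obtain ⟨x, hx⟩ : ∃ x, x ≠ p := by
    by_cases hap : a = p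
    · exact ⟨b, fun hbp => hab (hap.trans hbp.symm)⟩
    · exact ⟨a, hap⟩
  have hlim := tendsto_birkhoffAvg_of_forall_meanProximalPair hT hp
    (fun z hz => (h z p hz).1) x
  exact (h x p hx).2.ne' hlim.limsup_eq
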